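/- Let k be a field, let M be a module over the power series ring k[[u]], and let K ⊆ M be a finitely generated k[[u]]-submodule. Then the natural map T_u(M) → T_u(M/K), given by applying the quotient map M → M/K componentwise to compatible sequences, is injective, and there exists an injective k[[u]]-linear map from the cokernel of T_u(M) → T_u(M/K) into K; in other words, there is an exact sequence of k[[u]]-modules 0 → T_u(M) → T_u(M/K) → K. -/

import Mathlib

open PowerSeries

/-- The `x`-adic Tate module of an `R`-module `M`, realized as the `R`-submodule of
`∏_{n ≥ 1} M[x^n]` (reindexed so that the `n`-th component is `y_{n+1} ∈ M[x^{n+1}]`)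
consisting of the sequences `(y_n)_{n ≥ 1}` with `x^n • y_n = 0` and `x • y_{n+1} = y_n`
for all `n ≥ 1`, with the componentwise `R`-action. -/
def tateModule (R : Type*) [CommRing R] (x : R)
    (M : Type*) [AddCommGroup M] [Module R M] : Submodule R (ℕ → M) where
  carrier := {y | ∀ n : ℕ, x ^ (n + 1) • y n = 0 ∧ x • y (n + 1) = y n}
  zero_mem' := by intro n; simp
  add_mem' := by
    intro a b ha hb n
    refine ⟨?_, ?_⟩ <;> simp [smul_add, (ha n).1, (hb n).1, (ha n).2, (hb n).2]
  smul_mem' := by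
    intro c y hy n
    constructor
    · rw [Pi.smul_apply, smul_comm, (hy n).1, smul_zero]
    · rw [Pi.smul_apply, Pi.smul_apply, smul_comm, (hy n).2]

/-- The map `T_x(M) → T_x(N)` induced by an `R`-linear map `f : M → N`, given by applying
`f` componentwise to compatible sequences. -/
def tateModuleMap {R : Type*} [CommRing R] (x : R)
    {M N : Type*} [AddCommGroup M] [Module R M] [AddCommGroup N] [Module R N]
    (f : M →ₗ[R] N) : tateModule R x M →ₗ[R] tateModule R x N where
  toFun y := ⟨fun n => f (y.1 n), by
    intro n
    constructor
    · rw [← map_smul, (y.2 n).1, map_zero]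
    · rw [← map_smul, (y.2 n).2]⟩
  map_add' a b := by
    apply Subtype.ext
    funext n
    simp
  map_smul' c a := by
    apply Subtype.ext
    funext n
    simp

/-!
Call `z : ℕ → M` with `x • z (n + 1) = z n` a division sequence. A Tate sequence is a division
sequence with `x • z 0 = 0`. If `K ⊆ M` is adically complete for an ideal containing `x`, every
division sequence of `M ⧸ K` lifts uniquely to `M`: two lifts differ by a division sequence of `K`,
whose terms are infinitely divisible by `x`, and the defects of arbitrary lifts are corrected by the
convergent series `∑ i, x ^ i • d (n + i)`. Lifting a Tate sequence of `M ⧸ K` to a division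
sequence `z` of `M` and taking `x • z 0` gives the connecting map to `K`, which vanishes precisely
when `z` is itself a Tate sequence.
-/

section AdicCompleteness

variable {R M : Type*} [CommRing R] [AddCommGroup M] [Module R M]

theorem isPrecomplete_of_finite (I : Ideal R) [IsPrecomplete I R] [Module.Finite R M] :
    IsPrecomplete I M := by
  rw [← AdicCompletion.of_surjective_iff]
  intro y
  obtain ⟨w, rfl⟩ := AdicCompletion.ofTensorProduct_surjective_of_finite I M y
  induction w with
  | zero => exact ⟨0, by simp⟩
  | add v w hv hw =>
    obtain ⟨a, ha⟩ := hv
    obtain ⟨b, hb⟩ := hw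
    exact ⟨a + b, by rw [map_add, map_add, ha, hb]⟩
  | tmul r m =>
    obtain ⟨a, rfl⟩ := AdicCompletion.of_surjective I R r
    refine ⟨a • m, ?_⟩
    rw [AdicCompletion.ofTensorProduct_tmul, map_smul]
    exact (algebraMap_smul (AdicCompletion I R) a (AdicCompletion.of I M m)).symm

theorem isAdicComplete_of_finite [IsNoetherianRing R] (I : Ideal R) [IsAdicComplete I R]
    [Module.Finite R M] : IsAdicComplete I M where
  toIsHausdorff := .of_le_jacobson I M (IsAdicComplete.le_jacobson_bot I)
  toIsPrecomplete := isPrecomplete_of_finite I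

variable {I : Ideal R} {x : R}

theorem exists_sum_range_smodEq [IsPrecomplete I M] (hx : x ∈ I) (d : ℕ → M) :
    ∃ L : M, ∀ m, ∑ i ∈ Finset.range m, x ^ i • d i ≡ L [SMOD (I ^ m • ⊤ : Submodule R M)] := by
  have hcauchy : AdicCompletion.IsAdicCauchy I M fun m => ∑ i ∈ Finset.range m, x ^ i • d i := by
    rw [AdicCompletion.isAdicCauchy_iff]
    intro m
    rw [SModEq.comm, SModEq.sub_mem, Finset.sum_range_succ, add_sub_cancel_left]
    exact Submodule.smul_mem_smul (Ideal.pow_mem_pow hx m) Submodule.mem_top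
  exact IsPrecomplete.prec' _ hcauchy

theorem exists_eq_add_smul_succ [IsAdicComplete I M] (hx : x ∈ I) (d : ℕ → M) :
    ∃ t : ℕ → M, ∀ n, t n = d n + x • t (n + 1) := by
  choose t ht using fun n => exists_sum_range_smodEq hx fun i => d (n + i)
  refine ⟨t, fun n => (IsHausdorff.eq_iff_smodEq (I := I)).2 fun m => ?_⟩
  calc
    t n ≡ ∑ i ∈ Finset.range (m + 1), x ^ i • d (n + i) [SMOD (I ^ m • ⊤ : Submodule R M)] :=
      ((ht n (m + 1)).mono (Submodule.pow_smul_top_le I M m.le_succ)).symm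
    _ = d n + x • ∑ i ∈ Finset.range m, x ^ i • d (n + 1 + i) := by
      simp_rw [Finset.sum_range_succ', Finset.smul_sum, smul_smul, ← pow_succ', add_right_comm n 1,
        add_assoc n, add_zero, pow_zero, one_smul, add_comm]
    _ ≡ d n + x • t (n + 1) [SMOD (I ^ m • ⊤ : Submodule R M)] :=
      SModEq.rfl.add ((ht (n + 1) m).smul x)

end AdicCompleteness

section DivisionSequences

variable {R M N : Type*} [CommRing R] [AddCommGroup M] [Module R M] [AddCommGroup N] [Module R N]

/-- The sequences `z` with `x • z (n + 1) = z n`, i.e. the limit of `⋯ → M → M → M` along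
multiplication by `x`. The Tate module consists of those whose initial term is killed by `x`. -/
def divisionSequences (x : R) (M : Type*) [AddCommGroup M] [Module R M] :
    Submodule R (ℕ → M) where
  carrier := {z | ∀ n, x • z (n + 1) = z n}
  zero_mem' n := smul_zero x
  add_mem' hz hw n := by rw [Pi.add_apply, smul_add, hz n, hw n, Pi.add_apply]
  smul_mem' c z hz n := by rw [Pi.smul_apply, smul_comm, hz n, Pi.smul_apply]

/-- The map on division sequences given by applying a linear map componentwise. -/
def divisionSequencesMap (x : R) (f : M →ₗ[R] N) :
    divisionSequences x M →ₗ[R] divisionSequences x N :=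
  (f.compLeft ℕ).restrict fun z hz n => by
    simp only [LinearMap.compLeft_apply, Function.comp_apply, ← map_smul, hz n]

variable {x : R}

theorem pow_smul_divisionSequences_apply {z : ℕ → M} (hz : z ∈ divisionSequences x M) (n m : ℕ) :
    x ^ m • z (n + m) = z n := by
  induction m with
  | zero => simp
  | succ m ih => rw [pow_succ, mul_smul, ← add_assoc, hz, ih]

theorem mem_tateModule_iff {z : ℕ → M} :
    z ∈ tateModule R x M ↔ z ∈ divisionSequences x M ∧ x • z 0 = 0 := by
  refine ⟨fun hz => ⟨fun n => (hz n).2, by simpa using (hz 0).1⟩, fun ⟨hz, h0⟩ n => ⟨?_, hz n⟩⟩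
  have hzn : x ^ n • z n = z 0 := by simpa using pow_smul_divisionSequences_apply hz 0 n
  rw [pow_succ', mul_smul, hzn, h0]

theorem tateModule_le_divisionSequences : tateModule R x M ≤ divisionSequences x M :=
  fun _ hz => (mem_tateModule_iff.1 hz).1

theorem divisionSequences_eq_bot {I : Ideal R} [IsHausdorff I M] (hx : x ∈ I) :
    divisionSequences x M = ⊥ := by
  refine (Submodule.eq_bot_iff _).2 fun z hz => funext fun n => ?_
  refine IsHausdorff.haus' (I := I) _ fun m => SModEq.zero.2 ?_
  rw [← pow_smul_divisionSequences_apply hz n m]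
  exact Submodule.smul_mem_smul (Ideal.pow_mem_pow hx m) Submodule.mem_top

end DivisionSequences

section Quotient

variable {R M : Type*} [CommRing R] [AddCommGroup M] [Module R M] {x : R} {I : Ideal R}
  {K : Submodule R M}

theorem divisionSequencesMap_mkQ_injective [IsHausdorff I K] (hx : x ∈ I) :
    Function.Injective (divisionSequencesMap x K.mkQ) := by
  refine (injective_iff_map_eq_zero _).2 fun z hz => Subtype.ext ?_
  have hzK (n : ℕ) : z.1 n ∈ K :=
    (Submodule.Quotient.mk_eq_zero K).1 (congrFun (congrArg Subtype.val hz) n)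
  have hmem : (fun n => (⟨z.1 n, hzK n⟩ : K)) ∈ divisionSequences x K :=
    fun n => Subtype.ext (z.2 n)
  rw [divisionSequences_eq_bot hx, Submodule.mem_bot] at hmem
  exact funext fun n => congrArg Subtype.val (congrFun hmem n)

theorem divisionSequencesMap_mkQ_surjective [IsAdicComplete I K] (hx : x ∈ I) :
    Function.Surjective (divisionSequencesMap x K.mkQ) := by
  intro y
  choose m hm using fun n => K.mkQ_surjective (y.1 n)
  have hd (n : ℕ) : x • m (n + 1) - m n ∈ K := by
    rw [← K.ker_mkQ, LinearMap.mem_ker, map_sub, map_smul, hm, hm, y.2 n, sub_self]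
  obtain ⟨t, ht⟩ := exists_eq_add_smul_succ hx fun n => (⟨_, hd n⟩ : K)
  have ht_coe (n : ℕ) : (t n : M) = x • m (n + 1) - m n + x • (t (n + 1) : M) :=
    congrArg Subtype.val (ht n)
  refine ⟨⟨fun n => m n + t n, fun n => ?_⟩, Subtype.ext (funext fun n => ?_)⟩
  · change x • (m (n + 1) + (t (n + 1) : M)) = m n + t n
    rw [ht_coe n, smul_add]
    abel
  · change K.mkQ (m n + t n) = y.1 n
    rw [map_add, hm, K.mkQ_apply (t n), (Submodule.Quotient.mk_eq_zero K).2 (t n).2, add_zero]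

end Quotient

section Connecting

variable {R M N : Type*} [CommRing R] [AddCommGroup M] [Module R M] [AddCommGroup N] [Module R N]
  {x : R} {f : M →ₗ[R] N}

theorem tateModuleMap_injective (hf : Function.Injective (divisionSequencesMap x f)) :
    Function.Injective (tateModuleMap x f) := by
  intro z w h
  refine Submodule.inclusion_injective tateModule_le_divisionSequences (hf (Subtype.ext ?_))
  exact congrArg (fun y : tateModule R x N => y.1) h

/-- The lift of Tate sequences along a linear map that induces a bijection on division sequences.
The lift of a Tate sequence is a division sequence, but in general not a Tate sequence. -/
noncomputable def tateModuleLift (hf : Function.Bijective (divisionSequencesMap x f)) :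
    tateModule R x N →ₗ[R] divisionSequences x M :=
  (LinearEquiv.ofBijective _ hf).symm.toLinearMap ∘ₗ
    Submodule.inclusion tateModule_le_divisionSequences

theorem apply_tateModuleLift (hf : Function.Bijective (divisionSequencesMap x f))
    (y : tateModule R x N) (n : ℕ) : f ((tateModuleLift hf y).1 n) = y.1 n :=
  congrFun (congrArg Subtype.val ((LinearEquiv.ofBijective _ hf).apply_symm_apply
    (Submodule.inclusion tateModule_le_divisionSequences y))) n

theorem tateModuleLift_tateModuleMap (hf : Function.Bijective (divisionSequencesMap x f))
    (z : tateModule R x M) :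
    tateModuleLift hf (tateModuleMap x f z) =
      Submodule.inclusion tateModule_le_divisionSequences z :=
  (LinearEquiv.ofBijective _ hf).symm_apply_apply
    (Submodule.inclusion tateModule_le_divisionSequences z)

variable {K : Submodule R M}

/-- The connecting map `T_x(M ⧸ K) → K`, sending a Tate sequence with lift `z` to `x • z 0`. -/
noncomputable def tateModuleConnecting
    (hK : Function.Bijective (divisionSequencesMap x K.mkQ)) : tateModule R x (M ⧸ K) →ₗ[R] K :=
  (x • LinearMap.proj 0 ∘ₗ (divisionSequences x M).subtype ∘ₗ tateModuleLift hK).codRestrict K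
    fun y => by
      refine K.ker_mkQ.le ?_
      change K.mkQ (x • (tateModuleLift hK y).1 0) = 0
      rw [map_smul, apply_tateModuleLift]
      exact (mem_tateModule_iff.1 y.2).2

theorem coe_tateModuleConnecting_apply (hK : Function.Bijective (divisionSequencesMap x K.mkQ))
    (y : tateModule R x (M ⧸ K)) :
    (tateModuleConnecting hK y : M) = x • (tateModuleLift hK y).1 0 :=
  rfl

theorem ker_tateModuleConnecting (hK : Function.Bijective (divisionSequencesMap x K.mkQ)) :
    LinearMap.ker (tateModuleConnecting hK) = LinearMap.range (tateModuleMap x K.mkQ) := by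
  ext y
  rw [LinearMap.mem_ker, ← Submodule.coe_eq_zero, coe_tateModuleConnecting_apply]
  constructor
  · intro h0
    exact ⟨⟨_, mem_tateModule_iff.2 ⟨(tateModuleLift hK y).2, h0⟩⟩,
      Subtype.ext (funext (apply_tateModuleLift hK y))⟩
  · rintro ⟨z, rfl⟩
    rw [tateModuleLift_tateModuleMap]
    exact (mem_tateModule_iff.1 z.2).2

end Connecting

theorem tateModule_quotient_exact_general {R M : Type*} [CommRing R] [AddCommGroup M] [Module R M]
    {I : Ideal R} {x : R} (hx : x ∈ I) (K : Submodule R M) [IsAdicComplete I K] :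
    Function.Injective (tateModuleMap x K.mkQ) ∧
      ∃ ψ : (tateModule R x (M ⧸ K) ⧸ LinearMap.range (tateModuleMap x K.mkQ)) →ₗ[R] K,
        Function.Injective ψ := by
  have hK : Function.Bijective (divisionSequencesMap x K.mkQ) :=
    ⟨divisionSequencesMap_mkQ_injective hx, divisionSequencesMap_mkQ_surjective hx⟩
  have hker := ker_tateModuleConnecting hK
  exact ⟨tateModuleMap_injective hK.1, Submodule.liftQ _ (tateModuleConnecting hK) hker.ge,
    LinearMap.ker_eq_bot.1 (Submodule.ker_liftQ_eq_bot _ _ _ hker.le)⟩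

/-- Let `k` be a field, `M` a `k[[u]]`-module and `K ⊆ M` a finitely generated
`k[[u]]`-submodule.  Then the natural map `T_u(M) → T_u(M/K)`, given by applying the
quotient map componentwise, is injective, and there is an injective `k[[u]]`-linear map
from its cokernel into `K`; i.e. there is an exact sequence
`0 → T_u(M) → T_u(M/K) → K` of `k[[u]]`-modules. -/
theorem tateModule_quotient_exact
    {k : Type*} [Field k] (M : Type*) [AddCommGroup M] [Module (PowerSeries k) M]
    (K : Submodule (PowerSeries k) M) (hK : K.FG) :
    Function.Injective (tateModuleMap (X : PowerSeries k) K.mkQ) ∧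
      ∃ ψ : ((tateModule (PowerSeries k) (X : PowerSeries k) (M ⧸ K)) ⧸
          LinearMap.range (tateModuleMap (X : PowerSeries k) K.mkQ)) →ₗ[PowerSeries k] K,
        Function.Injective ψ := by
  have : Module.Finite (PowerSeries k) K := .of_fg hK
  have := isAdicComplete_of_finite (M := K) (Ideal.span {(X : PowerSeries k)})
  exact tateModule_quotient_exact_general (Ideal.mem_span_singleton_self X) K
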